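/- arXiv:2308.01432 — 2 statements merged into one kernel-verified Lean document; each statement's English description precedes it below -/
import Mathlib

section
/- Let d, m₁, m₂ be positive integers, let (B¹_α)_{α ∈ Fin m₁} and (B²_β)_{β ∈ Fin m₂} be families of d×d complex matrices, and let U be a unitary d×d complex matrix (Uᴴ·U = 1 and U·Uᴴ = 1). Suppose u is an m₁×m₁ complex matrix and v is an m₂×m₂ complex matrix such that Uᴴ·B¹_α·U = Σ_γ u_{αγ}·B¹_γ for all α and Uᴴ·B²_β·U = Σ_δ v_{βδ}·B²_δ for all β. Let w¹ : Fin m₁ → ℂ, w² : Fin m₂ → ℂ, O = (Σ_α w¹_α·B¹_α)·(Σ_β w²_β·B²_β), let ρ be any d×d complex matrix, and set E^in_{γδ} = Tr(B¹_γ·B²_δ·ρ). Then Tr(O·U·ρ·Uᴴ) = Σ_{α,γ,δ,β} w¹_α·u_{αγ}·E^in_{γδ}·v_{βδ}·w²_β, i.e., the expectation value equals (w¹)ᵀ·(u·E^in·vᵀ)·w². (Result 3 of the paper: simulation of a product of two observables, each supported by a single invariant subspace, via the second-order correlator matrix E^out = u·E^in·vᵀ.) -/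
open Matrix

/-! In the Heisenberg picture the circuit acts on each factor of the observable separately, because
`U * Uᴴ = 1` may be inserted between the factors. The correlators are bilinear in the two families
of observables, so linear substitutions in the families multiply the correlator matrix by `u` on the
left and by `vᵀ` on the right. -/

section Correlator

variable {R n k ι₁ ι₂ κ₁ κ₂ : Type*} [CommSemiring R] [Fintype n] [Fintype k]

/-- The second-order correlator matrix `E γ δ = Tr(B₁ γ B₂ δ ρ)` of two families of observables in
the state `ρ`. The observables and the state are arbitrary square matrices, with no hermiticity,
positivity or normalization. -/
def correlatorMatrix (B₁ : ι₁ → Matrix n n R) (B₂ : ι₂ → Matrix n n R) (ρ : Matrix n n R) :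
    Matrix ι₁ ι₂ R :=
  of fun γ δ => (B₁ γ * B₂ δ * ρ).trace

@[simp]
theorem correlatorMatrix_apply (B₁ : ι₁ → Matrix n n R) (B₂ : ι₂ → Matrix n n R)
    (ρ : Matrix n n R) (γ : ι₁) (δ : ι₂) :
    correlatorMatrix B₁ B₂ ρ γ δ = (B₁ γ * B₂ δ * ρ).trace :=
  rfl

theorem correlatorMatrix_mul_mul [DecidableEq n] {U : Matrix n k R} {V : Matrix k n R}
    (hUV : U * V = 1) (B₁ : ι₁ → Matrix n n R) (B₂ : ι₂ → Matrix n n R) (ρ : Matrix k k R) :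
    correlatorMatrix B₁ B₂ (U * ρ * V) =
      correlatorMatrix (fun α => V * B₁ α * U) (fun β => V * B₂ β * U) ρ := by
  ext α β
  calc (B₁ α * B₂ β * (U * ρ * V)).trace
      = (B₁ α * B₂ β * U * ρ * V).trace := by simp only [Matrix.mul_assoc]
    _ = (V * (B₁ α * B₂ β * U * ρ)).trace := trace_mul_comm _ _
    _ = (V * B₁ α * (U * V) * B₂ β * U * ρ).trace := by
        simp only [hUV, Matrix.mul_one, Matrix.mul_assoc]
    _ = (V * B₁ α * U * (V * B₂ β * U) * ρ).trace := by simp only [Matrix.mul_assoc]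

variable [Fintype κ₁] [Fintype κ₂]

theorem trace_sum_smul_mul_sum_smul_mul (w₁ : κ₁ → R) (w₂ : κ₂ → R)
    (B₁ : κ₁ → Matrix n n R) (B₂ : κ₂ → Matrix n n R) (ρ : Matrix n n R) :
    ((∑ γ, w₁ γ • B₁ γ) * (∑ δ, w₂ δ • B₂ δ) * ρ).trace =
      w₁ ⬝ᵥ correlatorMatrix B₁ B₂ ρ *ᵥ w₂ := by
  simp only [Matrix.sum_mul, Matrix.smul_mul, Matrix.mul_smul, trace_sum,
    trace_smul, smul_eq_mul, dotProduct, mulVec, correlatorMatrix_apply, Finset.mul_sum]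
  rw [Finset.sum_comm]
  exact Finset.sum_congr rfl fun γ _ => Finset.sum_congr rfl fun δ _ => by ring

theorem correlatorMatrix_sum_smul (u : Matrix ι₁ κ₁ R) (v : Matrix ι₂ κ₂ R)
    (B₁ : κ₁ → Matrix n n R) (B₂ : κ₂ → Matrix n n R) (ρ : Matrix n n R) :
    correlatorMatrix (fun α => ∑ γ, u α γ • B₁ γ) (fun β => ∑ δ, v β δ • B₂ δ) ρ =
      u * correlatorMatrix B₁ B₂ ρ * vᵀ := by
  ext α β
  rw [correlatorMatrix_apply, trace_sum_smul_mul_sum_smul_mul, Matrix.mul_assoc]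
  rfl

theorem correlatorMatrix_mul_mul_eq_mul_mul_transpose [DecidableEq n] {U : Matrix n k R}
    {V : Matrix k n R} (hUV : U * V = 1)
    {B₁ : ι₁ → Matrix n n R} {B₂ : ι₂ → Matrix n n R}
    {C₁ : κ₁ → Matrix k k R} {C₂ : κ₂ → Matrix k k R} {u : Matrix ι₁ κ₁ R} {v : Matrix ι₂ κ₂ R}
    (hu : ∀ α, V * B₁ α * U = ∑ γ, u α γ • C₁ γ)
    (hv : ∀ β, V * B₂ β * U = ∑ δ, v β δ • C₂ δ) (ρ : Matrix k k R) :
    correlatorMatrix B₁ B₂ (U * ρ * V) = u * correlatorMatrix C₁ C₂ ρ * vᵀ := by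
  simp only [correlatorMatrix_mul_mul hUV, hu, hv, correlatorMatrix_sum_smul]

variable [Fintype ι₁] [Fintype ι₂]

theorem dotProduct_mul_mul_transpose_mulVec (w₁ : ι₁ → R) (u : Matrix ι₁ κ₁ R)
    (E : Matrix κ₁ κ₂ R) (v : Matrix ι₂ κ₂ R) (w₂ : ι₂ → R) :
    w₁ ⬝ᵥ (u * E * vᵀ) *ᵥ w₂ =
      ∑ α, ∑ γ, ∑ δ, ∑ β, w₁ α * u α γ * E γ δ * v β δ * w₂ β := by
  rw [← mulVec_mulVec, ← mulVec_mulVec]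
  simp only [dotProduct, mulVec, transpose_apply, Finset.mul_sum, mul_assoc]

theorem stmt8_general [DecidableEq n] {U : Matrix n k R} {V : Matrix k n R} (hUV : U * V = 1)
    {B₁ : ι₁ → Matrix n n R} {B₂ : ι₂ → Matrix n n R}
    {C₁ : κ₁ → Matrix k k R} {C₂ : κ₂ → Matrix k k R} {u : Matrix ι₁ κ₁ R} {v : Matrix ι₂ κ₂ R}
    (hu : ∀ α, V * B₁ α * U = ∑ γ, u α γ • C₁ γ)
    (hv : ∀ β, V * B₂ β * U = ∑ δ, v β δ • C₂ δ)
    (w₁ : ι₁ → R) (w₂ : ι₂ → R) (ρ : Matrix k k R) :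
    ((∑ α, w₁ α • B₁ α) * (∑ β, w₂ β • B₂ β) * U * ρ * V).trace =
      w₁ ⬝ᵥ (u * correlatorMatrix C₁ C₂ ρ * vᵀ) *ᵥ w₂ := by
  rw [← correlatorMatrix_mul_mul_eq_mul_mul_transpose hUV hu hv,
    ← trace_sum_smul_mul_sum_smul_mul]
  simp only [Matrix.mul_assoc]

end Correlator

/-- **Result 3 (simulation of a product of two observables).** If a unitary `U`
acts on the families `(B¹ α)` and `(B² β)` by the matrices `u` and `v`, then
the expectation value of the product observable
`O = (∑ α, w¹ α • B¹ α) * (∑ β, w² β • B² β)` after the circuit equals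
`(w¹)ᵀ · (u · E^in · vᵀ) · w²`, where `E^in γ δ = Tr(B¹ γ B² δ ρ)`. -/
theorem stmt8 (d m₁ m₂ : ℕ) (hd : 0 < d) (hm₁ : 0 < m₁) (hm₂ : 0 < m₂)
    (B₁ : Fin m₁ → Matrix (Fin d) (Fin d) ℂ)
    (B₂ : Fin m₂ → Matrix (Fin d) (Fin d) ℂ)
    (U : Matrix (Fin d) (Fin d) ℂ) (hU : Uᴴ * U = 1 ∧ U * Uᴴ = 1)
    (u : Matrix (Fin m₁) (Fin m₁) ℂ)
    (v : Matrix (Fin m₂) (Fin m₂) ℂ)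
    (hu : ∀ α, Uᴴ * B₁ α * U = ∑ γ, u α γ • B₁ γ)
    (hv : ∀ β, Uᴴ * B₂ β * U = ∑ δ, v β δ • B₂ δ)
    (w₁ : Fin m₁ → ℂ) (w₂ : Fin m₂ → ℂ)
    (O : Matrix (Fin d) (Fin d) ℂ)
    (hO : O = (∑ α, w₁ α • B₁ α) * (∑ β, w₂ β • B₂ β))
    (ρ : Matrix (Fin d) (Fin d) ℂ)
    (Ein : Matrix (Fin m₁) (Fin m₂) ℂ)
    (hEin : ∀ γ δ, Ein γ δ = (B₁ γ * B₂ δ * ρ).trace) :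
    (O * U * ρ * Uᴴ).trace =
      ∑ α, ∑ γ, ∑ δ, ∑ β, w₁ α * u α γ * Ein γ δ * v β δ * w₂ β := by
  simpa only [hO, hEin, dotProduct_mul_mul_transpose_mulVec, correlatorMatrix_apply] using
    stmt8_general hU.2 hu hv w₁ w₂ ρ
end

section
/- Let d, M be positive integers, and for each a ∈ Fin M let (B^{(a)}_α)_{α ∈ Fin m_a} be a family of d×d complex matrices, w^{(a)} : Fin m_a → ℂ, and u^{(a)} an m_a×m_a complex matrix. Let U be a unitary d×d complex matrix (Uᴴ·U = 1 and U·Uᴴ = 1) such that Uᴴ·B^{(a)}_α·U = Σ_β u^{(a)}_{αβ}·B^{(a)}_β for every a and α. Set O^{(a)} = Σ_α w^{(a)}_α·B^{(a)}_α, and for any d×d complex matrix ρ define the tensor T_{β} = Tr((Π_{a ∈ Fin M, increasing order} B^{(a)}_{β_a})·ρ) for every multi-index β ∈ Π_{a} Fin m_a. Then Tr((Π_{a ∈ Fin M, increasing order} O^{(a)})·U·ρ·Uᴴ) = Σ_{β ∈ Π_a Fin m_a} (Π_{a ∈ Fin M} (Σ_α w^{(a)}_α·u^{(a)}_{α β_a}))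 · T_{β}. (The M-th order product formula of Appendix A.2: the expectation value of a product of M observables, each supported by a single invariant subspace, equals the contraction of the tensor of initial expectation values with the evolved weight vectors.) -/
open Matrix

/-!
In the Heisenberg picture, conjugation by `U` is an algebra endomorphism, so it distributes over the
ordered product, and on each observable it only replaces the weight vector `w a` by `w a ᵥ* u a`.
The product of the evolved observables is then expanded by multilinearity, which involves no
reordering of the factors. Cyclicity of the trace moves the conjugation from the state to the
observables.
-/

section Module

variable {R N N' κ κ' : Type*} [CommSemiring R] [AddCommMonoid N] [Module R N]
  [AddCommMonoid N'] [Module R N'] [Fintype κ] [Fintype κ']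

theorem map_sum_smul_eq_sum_vecMul_smul (f : N →ₗ[R] N') {b : κ → N} {b' : κ' → N'}
    {u : Matrix κ κ' R} (hu : ∀ α, f (b α) = ∑ β, u α β • b' β) (w : κ → R) :
    f (∑ α, w α • b α) = ∑ β, (w ᵥ* u) β • b' β := by
  simp only [map_sum, map_smul, hu, Finset.smul_sum, smul_smul, vecMul, dotProduct,
    Finset.sum_smul]
  exact Finset.sum_comm

end Module

section Algebra

variable {R A A' : Type*} [CommSemiring R] [Semiring A] [Algebra R A] [Semiring A'] [Algebra R A']
  {M : ℕ} {κ κ' : Fin M → Type*} [∀ a, Fintype (κ a)] [∀ a, Fintype (κ' a)]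

theorem prod_map_finRange_sum_smul (c : ∀ a, κ a → R) (b : ∀ a, κ a → A) :
    ((List.finRange M).map fun a => ∑ β, c a β • b a β).prod =
      ∑ β : ∀ a, κ a, (∏ a, c a (β a)) • ((List.finRange M).map fun a => b a (β a)).prod := by
  simpa only [MultilinearMap.map_smul_univ, MultilinearMap.mkPiAlgebraFin_apply,
    List.ofFn_eq_map] using
    (MultilinearMap.mkPiAlgebraFin R M A).map_sum fun a β => c a β • b a β

theorem map_prod_sum_smul_eq_sum_prod_vecMul_smul (f : A →ₐ[R] A') {b : ∀ a, κ a → A}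
    {b' : ∀ a, κ' a → A'} {u : ∀ a, Matrix (κ a) (κ' a) R}
    (hu : ∀ a α, f (b a α) = ∑ β, u a α β • b' a β) (w : ∀ a, κ a → R) :
    f ((List.finRange M).map fun a => ∑ α, w a α • b a α).prod =
      ∑ β : ∀ a, κ' a, (∏ a, (w a ᵥ* u a) (β a)) •
        ((List.finRange M).map fun a => b' a (β a)).prod := by
  have evolve (a : Fin M) : f (∑ α, w a α • b a α) = ∑ β, (w a ᵥ* u a) β • b' a β :=
    map_sum_smul_eq_sum_vecMul_smul f.toLinearMap (hu a) (w a)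
  rw [map_list_prod, List.map_map, ← prod_map_finRange_sum_smul]
  exact congrArg List.prod (List.map_congr_left fun a _ => evolve a)

theorem inv_mul_prod_sum_smul_mul_eq_sum (U : Aˣ) {B : ∀ a, κ a → A}
    {u : ∀ a, Matrix (κ a) (κ a) R}
    (hu : ∀ a α, ↑U⁻¹ * B a α * ↑U = ∑ β, u a α β • B a β) (w : ∀ a, κ a → R) :
    ↑U⁻¹ * ((List.finRange M).map fun a => ∑ α, w a α • B a α).prod * ↑U =
      ∑ β : ∀ a, κ a, (∏ a, (w a ᵥ* u a) (β a)) •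
        ((List.finRange M).map fun a => B a (β a)).prod :=
  map_prod_sum_smul_eq_sum_prod_vecMul_smul
    (MulSemiringAction.toAlgHom R A (ConjAct.toConjAct U⁻¹)) hu w

theorem stmt9_general (τ : A →ₗ[R] R) (hτ : ∀ x y, τ (x * y) = τ (y * x))
    (B : ∀ a, κ a → A) (w : ∀ a, κ a → R) (u : ∀ a, Matrix (κ a) (κ a) R) (U : Aˣ)
    (hu : ∀ a α, ↑U⁻¹ * B a α * ↑U = ∑ β, u a α β • B a β)
    (O : Fin M → A) (hO : ∀ a, O a = ∑ α, w a α • B a α) (ρ : A) (T : (∀ a, κ a) → R)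
    (hT : ∀ β, T β = τ (((List.finRange M).map fun a => B a (β a)).prod * ρ)) :
    τ (((List.finRange M).map O).prod * U * ρ * ↑U⁻¹) =
      ∑ β : ∀ a, κ a, (∏ a, ∑ α, w a α * u a α (β a)) * T β := by
  obtain rfl : O = fun a => ∑ α, w a α • B a α := funext hO
  set P := ((List.finRange M).map fun a => ∑ α, w a α • B a α).prod with hP
  calc τ (P * U * ρ * ↑U⁻¹)
      = τ (↑U⁻¹ * P * U * ρ) := by rw [hτ]; simp only [mul_assoc]
    _ = ∑ β : ∀ a, κ a, (∏ a, (w a ᵥ* u a) (β a)) * T β := by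
        rw [hP, inv_mul_prod_sum_smul_mul_eq_sum U hu w]
        simp only [Finset.sum_mul, smul_mul_assoc, map_sum, map_smul, smul_eq_mul, hT]

end Algebra

/-- **M-th order product formula.** If a unitary `U` acts on each family
`(B^{(a)} α)` by the matrix `u^{(a)}`, then the expectation value of the ordered
product `∏ a, O^{(a)}` of observables `O^{(a)} = ∑ α, w^{(a)} α • B^{(a)} α`
after the circuit equals the contraction of the tensor of initial expectation
values `T β = Tr((∏ a, B^{(a)} (β a)) ρ)` with the evolved weight vectors. -/
theorem stmt9 (d M : ℕ) (hd : 0 < d) (hM : 0 < M)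
    (m : Fin M → ℕ)
    (B : (a : Fin M) → Fin (m a) → Matrix (Fin d) (Fin d) ℂ)
    (w : (a : Fin M) → Fin (m a) → ℂ)
    (u : (a : Fin M) → Matrix (Fin (m a)) (Fin (m a)) ℂ)
    (U : Matrix (Fin d) (Fin d) ℂ) (hU : Uᴴ * U = 1 ∧ U * Uᴴ = 1)
    (hu : ∀ a α, Uᴴ * B a α * U = ∑ β, u a α β • B a β)
    (O : (a : Fin M) → Matrix (Fin d) (Fin d) ℂ)
    (hO : ∀ a, O a = ∑ α, w a α • B a α)
    (ρ : Matrix (Fin d) (Fin d) ℂ)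
    (T : ((a : Fin M) → Fin (m a)) → ℂ)
    (hT : ∀ β, T β =
      ((((List.finRange M).map (fun a => B a (β a))).prod) * ρ).trace) :
    (((List.finRange M).map O).prod * U * ρ * Uᴴ).trace =
      ∑ β : (a : Fin M) → Fin (m a),
        (∏ a, ∑ α, w a α * u a α (β a)) * T β :=
  stmt9_general (traceLinearMap (Fin d) ℂ ℂ) trace_mul_comm B w u ⟨U, Uᴴ, hU.2, hU.1⟩ hu O hO ρ T hT
end
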